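/- Consider a hitting-set instance (A,B,U) with |A| = |B| = n in which every set of A has cardinality t = (|U|+1)/2, and let G be the graph associated with this instance with unit costs π ≡ 1 and S=(s). Then W(x,s) = U ∪ {x} ∪ B and hence L_π((s,x)) = n + 2t; and W(y,s) = V \ {s,x} and hence L_π((s,y)) = 2(n+t). -/

import Mathlib

/-!
The distances from `s`, `x` and `y` needed for the comparison can be read off directly:

* from `s`: `x`, `y` at distance `1`; `U` and `A` at distance `2`; `B` at distance at least `3`;
* from `x`: `s`, `y`, `U` at distance `1`; `A` (through `y`) and `B` (through `U`) at distance `2`;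
* from `y`: `s`, `x`, `U`, `A` at distance `1`; `B` at distance `2`.

Connectedness makes every set of `B` nonempty, so that each vertex of `B` has a neighbour in `U`
(it also excludes the junk value `0` of `SimpleGraph.dist` in the lower bounds). Comparing distances gives `W(x,s)` and `W(y,s)`. In the Voronoi diagram of
`(s,v)` the site `v` owns `W(v,s)` and `s` owns the complement, so with unit costs the load is the
larger of the two cardinalities (`Lload_pair`). Since `|U| = 2t - 1` and `t ≥ 1`, this is `|W(v,s)|`
for both `v = x` and `v = y`.
-/

/-- The distance from a vertex `v` to a list `S` of vertices:
`d(v,S) = min_{s ∈ S} d(v,s)`. -/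
noncomputable def dList {V : Type*} (G : SimpleGraph V) (v : V) (S : List V) : ℕ :=
  sInf ((G.dist v) '' {s | s ∈ S})

/-- The territory `𝕋(s_i, S)` of the `i`-th site of the list `S` in the prioritized
Voronoi diagram: vertices `v` with `d(v,s_i) = d(v,S)` and `d(v,s_j) > d(v,S)` for `j < i`. -/
def territory {V : Type*} (G : SimpleGraph V) (S : List V) (i : Fin S.length) : Set V :=
  {v | G.dist v (S.get i) = dList G v S ∧
       ∀ j : Fin S.length, j < i → dList G v S < G.dist v (S.get j)}

/-- `W(u,v)`: the set of vertices strictly closer to `u` than to `v`. -/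
def Wset {V : Type*} (G : SimpleGraph V) (u v : V) : Set V :=
  {w | G.dist u w < G.dist v w}

/-- The load `ℓ_π(s_i,S)` of the `i`-th site: the total cost of its territory. -/
noncomputable def load {V : Type*} (G : SimpleGraph V) (π : V → ℝ) (S : List V)
    (i : Fin S.length) : ℝ :=
  ∑ᶠ x ∈ territory G S i, π x

/-- The load `L_π(S)` of the prioritized Voronoi diagram: the maximum load of a site. -/
noncomputable def Lload {V : Type*} (G : SimpleGraph V) (π : V → ℝ) (S : List V) : ℝ :=
  ⨆ i : Fin S.length, load G π S i

/-- Vertices of the graph associated with a hitting-set instance `(A,B,U)` with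
`|A| = |B| = n` and universe `α`: one vertex `va i` (resp. `vb i`) per entry of the
list `A` (resp. `B`), one vertex `vu e` per element `e` of the universe, and three
special vertices `vs`, `vx`, `vy`. -/
inductive HSV (α : Type*) (n : ℕ) where
  | va : Fin n → HSV α n
  | vb : Fin n → HSV α n
  | vu : α → HSV α n
  | vs : HSV α n
  | vx : HSV α n
  | vy : HSV α n

/-- Base (asymmetric) adjacency relation of the associated graph: `U ∪ {x,y}` is a
clique, `s` is adjacent exactly to `x` and `y`, each `a ∈ A` is adjacent to `y` and
to the elements of `a`, and each `b ∈ B` is adjacent to the elements of `b`. -/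
def hsBase {α : Type*} {n : ℕ} (SA SB : Fin n → Finset α) :
    HSV α n → HSV α n → Prop
  | .vu _, .vu _ => True
  | .vu _, .vx => True
  | .vu _, .vy => True
  | .vx, .vy => True
  | .vs, .vx => True
  | .vs, .vy => True
  | .va _, .vy => True
  | .va i, .vu e => e ∈ SA i
  | .vb i, .vu e => e ∈ SB i
  | _, _ => False

/-- The graph associated with a hitting-set instance. -/
def hsGraph {α : Type*} {n : ℕ} (SA SB : Fin n → Finset α) :
    SimpleGraph (HSV α n) :=
  SimpleGraph.fromRel (hsBase SA SB)

/-! ### Small distances in a connected graph -/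

section Distance

variable {V : Type*} {G : SimpleGraph V}

lemma dist_eq_one_of_adj {u v : V} (h : G.Adj u v) : G.dist u v = 1 :=
  SimpleGraph.dist_eq_one_iff_adj.2 h

lemma dist_le_two_of_adj {u v w : V} (h : G.Adj u v) (h' : G.Adj v w) : G.dist u w ≤ 2 :=
  SimpleGraph.dist_le (.cons h (.cons h' .nil))

lemma two_le_dist (hG : G.Connected) {u v : V} (hne : u ≠ v) (h : ¬ G.Adj u v) :
    2 ≤ G.dist u v := by
  have h0 := hG.pos_dist_of_ne hne
  have h1 : G.dist u v ≠ 1 := fun e => h (SimpleGraph.dist_eq_one_iff_adj.1 e)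
  omega

lemma three_le_dist (hG : G.Connected) {u v : V} (hne : u ≠ v) (h : ¬ G.Adj u v)
    (hc : ∀ w, G.Adj u w → ¬ G.Adj w v) : 3 ≤ G.dist u v := by
  obtain ⟨p, hp⟩ := hG.exists_walk_length_eq_dist u v
  rw [← hp]
  match p with
  | .nil => exact absurd rfl hne
  | .cons h1 .nil => exact absurd h1 h
  | .cons h1 (.cons h2 .nil) => exact absurd h2 (hc _ h1)
  | .cons _ (.cons _ (.cons _ _)) => simp

end Distance

/-! ### Voronoi diagrams with two sites -/

section Voronoi

variable {V : Type*} (G : SimpleGraph V)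

lemma dList_pair (s v w : V) : dList G w [s, v] = min (G.dist w s) (G.dist w v) := by
  have h : (G.dist w '' {a | a ∈ [s, v]}) = {G.dist w s, G.dist w v} := by
    ext k
    simp [eq_comm]
  rw [dList, h, csInf_pair]

lemma territory_pair_zero (s v : V) :
    territory G [s, v] (0 : Fin 2) = (Wset G v s)ᶜ := by
  ext w
  simp [territory, dList_pair, Wset, G.dist_comm (u := w)]

lemma territory_pair_one (s v : V) : territory G [s, v] (1 : Fin 2) = Wset G v s := by
  ext w
  change (_ = _ ∧ ∀ j : Fin 2, j < 1 → _) ↔ _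
  simp [dList_pair, Wset, G.dist_comm (u := w)]
  exact le_of_lt

/-- With unit costs, the load of a pair of sites is the larger of the sizes of the two
territories. -/
lemma Lload_pair [Finite V] (s v : V) :
    Lload G (fun _ => 1) [s, v] = max ((Wset G v s)ᶜ.ncard : ℝ) ((Wset G v s).ncard : ℝ) := by
  have hone : ∀ T : Set V, ∑ᶠ w ∈ T, (1 : ℝ) = (T.ncard : ℝ) := fun T => by
    rw [finsum_mem_eq_finite_toFinset_sum _ T.toFinite, Set.ncard_eq_toFinset_card T T.toFinite]
    simp
  have h : Lload G (fun _ => 1) [s, v] = ⨆ i : Fin 2, load G (fun _ => 1) [s, v] i := rfl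
  have h0 : load G (fun _ => 1) [s, v] (0 : Fin 2) = ((Wset G v s)ᶜ.ncard : ℝ) := by
    rw [← territory_pair_zero]
    exact hone _
  have h1 : load G (fun _ => 1) [s, v] (1 : Fin 2) = ((Wset G v s).ncard : ℝ) := by
    rw [← territory_pair_one]
    exact hone _
  rw [h, ← h0, ← h1]
  apply le_antisymm
  · refine ciSup_le fun i => ?_
    fin_cases i
    · exact le_max_left _ _
    · exact le_max_right _ _
  · have hb : BddAbove (Set.range fun i : Fin 2 => load G (fun _ => 1) [s, v] i) :=
      (Set.finite_range _).bddAbove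
    exact max_le (le_ciSup hb 0) (le_ciSup hb 1)

end Voronoi

/-! ### Distances in the hitting-set graph -/

section Instance

variable {α : Type*} {n : ℕ} {SA SB : Fin n → Finset α}

/-- Every set of `B` is nonempty: the corresponding vertex has a neighbour because the graph is
connected, and all its neighbours lie in `U`. -/
lemma exists_mem_of_connected (hconn : (hsGraph SA SB).Connected) (i : Fin n) :
    ∃ e, e ∈ SB i := by
  obtain ⟨p, -⟩ := hconn.exists_walk_length_eq_dist (HSV.vb i) HSV.vs
  cases p with
  | @cons _ w _ h _ =>
    cases w <;> simp [hsGraph, hsBase] at h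
    exact ⟨_, h⟩

/-- The neighbours of `s` are `x` and `y`, neither of which is adjacent to a vertex of `B`. -/
lemma three_le_dist_vs_vb (hconn : (hsGraph SA SB).Connected) (i : Fin n) :
    3 ≤ (hsGraph SA SB).dist HSV.vs (HSV.vb i) := by
  refine three_le_dist hconn (by simp) (by simp [hsGraph, hsBase]) ?_
  intro w
  cases w <;> simp [hsGraph, hsBase]

lemma Wset_vx (hconn : (hsGraph SA SB).Connected) :
    Wset (hsGraph SA SB) HSV.vx HSV.vs =
      Set.range (HSV.vu : α → HSV α n) ∪ {HSV.vx} ∪ Set.range (HSV.vb : Fin n → HSV α n) := by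
  ext w
  cases w with
  | va i =>
    have h1 : 2 ≤ (hsGraph SA SB).dist HSV.vx (HSV.va i) :=
      two_le_dist hconn (by simp) (by simp [hsGraph, hsBase])
    have h2 : (hsGraph SA SB).dist HSV.vs (HSV.va i) ≤ 2 :=
      dist_le_two_of_adj (v := HSV.vy) (by simp [hsGraph, hsBase]) (by simp [hsGraph, hsBase])
    simp [Wset]
    omega
  | vb i =>
    obtain ⟨e, he⟩ := exists_mem_of_connected hconn i
    have h1 : (hsGraph SA SB).dist HSV.vx (HSV.vb i) ≤ 2 :=
      dist_le_two_of_adj (v := HSV.vu e) (by simp [hsGraph, hsBase]) (by simp [hsGraph, hsBase, he])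
    have h2 := three_le_dist_vs_vb hconn i
    simp [Wset]
    omega
  | vu e =>
    have h1 : (hsGraph SA SB).dist HSV.vx (HSV.vu e) = 1 :=
      dist_eq_one_of_adj (by simp [hsGraph, hsBase])
    have h2 : 2 ≤ (hsGraph SA SB).dist HSV.vs (HSV.vu e) :=
      two_le_dist hconn (by simp) (by simp [hsGraph, hsBase])
    simp [Wset]
    omega
  | vs => simp [Wset]
  | vx =>
    have h1 : (hsGraph SA SB).dist HSV.vs HSV.vx = 1 :=
      dist_eq_one_of_adj (by simp [hsGraph, hsBase])
    simp [Wset, h1]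
  | vy =>
    have h1 : (hsGraph SA SB).dist HSV.vs HSV.vy = 1 :=
      dist_eq_one_of_adj (by simp [hsGraph, hsBase])
    have h2 : (hsGraph SA SB).dist HSV.vx HSV.vy = 1 :=
      dist_eq_one_of_adj (by simp [hsGraph, hsBase])
    simp [Wset, h1, h2]

lemma Wset_vy (hconn : (hsGraph SA SB).Connected) :
    Wset (hsGraph SA SB) HSV.vy HSV.vs = Set.univ \ {HSV.vs, HSV.vx} := by
  ext w
  cases w with
  | va i =>
    have h1 : (hsGraph SA SB).dist HSV.vy (HSV.va i) = 1 :=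
      dist_eq_one_of_adj (by simp [hsGraph, hsBase])
    have h2 : 2 ≤ (hsGraph SA SB).dist HSV.vs (HSV.va i) :=
      two_le_dist hconn (by simp) (by simp [hsGraph, hsBase])
    simp [Wset]
    omega
  | vb i =>
    obtain ⟨e, he⟩ := exists_mem_of_connected hconn i
    have h1 : (hsGraph SA SB).dist HSV.vy (HSV.vb i) ≤ 2 :=
      dist_le_two_of_adj (v := HSV.vu e) (by simp [hsGraph, hsBase]) (by simp [hsGraph, hsBase, he])
    have h2 := three_le_dist_vs_vb hconn i
    simp [Wset]
    omega
  | vu e =>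
    have h1 : (hsGraph SA SB).dist HSV.vy (HSV.vu e) = 1 :=
      dist_eq_one_of_adj (by simp [hsGraph, hsBase])
    have h2 : 2 ≤ (hsGraph SA SB).dist HSV.vs (HSV.vu e) :=
      two_le_dist hconn (by simp) (by simp [hsGraph, hsBase])
    simp [Wset]
    omega
  | vs => simp [Wset]
  | vx =>
    have h1 : (hsGraph SA SB).dist HSV.vs HSV.vx = 1 :=
      dist_eq_one_of_adj (by simp [hsGraph, hsBase])
    have h2 : (hsGraph SA SB).dist HSV.vy HSV.vx = 1 :=
      dist_eq_one_of_adj (by simp [hsGraph, hsBase])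
    simp [Wset, h1, h2]
  | vy =>
    have h1 : (hsGraph SA SB).dist HSV.vs HSV.vy = 1 :=
      dist_eq_one_of_adj (by simp [hsGraph, hsBase])
    simp [Wset, h1]

end Instance

/-! ### Counting vertices -/

section Counting

variable (α : Type*) (n : ℕ)

/-- The vertices of the associated graph, sorted by kind, as a disjoint sum. -/
def hsvEquiv : HSV α n ≃ (Fin n ⊕ Fin n) ⊕ (α ⊕ Fin 3) where
  toFun
    | .va i => .inl (.inl i)
    | .vb i => .inl (.inr i)
    | .vu e => .inr (.inl e)
    | .vs => .inr (.inr 0)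
    | .vx => .inr (.inr 1)
    | .vy => .inr (.inr 2)
  invFun
    | .inl (.inl i) => .va i
    | .inl (.inr i) => .vb i
    | .inr (.inl e) => .vu e
    | .inr (.inr 0) => .vs
    | .inr (.inr 1) => .vx
    | .inr (.inr 2) => .vy
  left_inv w := by cases w <;> rfl
  right_inv w := by
    obtain (i | i) | (e | k) := w
    · rfl
    · rfl
    · rfl
    · fin_cases k <;> rfl

variable [Fintype α]

lemma finite_hsv : Finite (HSV α n) := Finite.of_equiv _ (hsvEquiv α n).symm

lemma card_hsv : Nat.card (HSV α n) = 2 * n + Fintype.card α + 3 := by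
  rw [Nat.card_congr (hsvEquiv α n)]
  simp
  ring

lemma ncard_Wset_vx :
    (Set.range (HSV.vu : α → HSV α n) ∪ {HSV.vx} ∪
      Set.range (HSV.vb : Fin n → HSV α n)).ncard = Fintype.card α + 1 + n := by
  have := finite_hsv α n
  have hu : (Set.range (HSV.vu : α → HSV α n)).ncard = Fintype.card α := by
    rw [← Set.image_univ, Set.ncard_image_of_injective _ fun _ _ h => HSV.vu.inj h]
    simp
  have hb : (Set.range (HSV.vb : Fin n → HSV α n)).ncard = n := by
    rw [← Set.image_univ, Set.ncard_image_of_injective _ fun _ _ h => HSV.vb.inj h]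
    simp
  rw [Set.ncard_union_eq, Set.ncard_union_eq, hu, hb, Set.ncard_singleton]
  · simp
  · rw [Set.disjoint_left]
    rintro _ (⟨e, rfl⟩ | rfl) ⟨i, hi⟩ <;> cases hi

end Counting

/-- in the graph associated with a hitting-set instance with
`|A| = |B| = n` and all sets of `A` of cardinality `t = (|U|+1)/2`, with unit
costs and `S = (s)`: `W(x,s) = U ∪ {x} ∪ B` and `L_π((s,x)) = n + 2t`, while
`W(y,s) = V \ {s,x}` and `L_π((s,y)) = 2(n+t)`. -/
theorem hs_hardness_xy_vertices {α : Type*} [Fintype α] [DecidableEq α] (n t : ℕ)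
    (SA SB : Fin n → Finset α)
    (hcardA : ∀ i : Fin n, (SA i).card = t)
    (ht : 2 * t = Fintype.card α + 1)
    (hconn : (hsGraph SA SB).Connected) :
    Wset (hsGraph SA SB) HSV.vx HSV.vs =
        Set.range (HSV.vu : α → HSV α n) ∪ {HSV.vx} ∪
          Set.range (HSV.vb : Fin n → HSV α n) ∧
    Lload (hsGraph SA SB) (fun _ => 1) [HSV.vs, HSV.vx] = (n : ℝ) + 2 * t ∧
    Wset (hsGraph SA SB) HSV.vy HSV.vs =
        Set.univ \ {HSV.vs, HSV.vx} ∧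
    Lload (hsGraph SA SB) (fun _ => 1) [HSV.vs, HSV.vy] = 2 * ((n : ℝ) + t) := by
  have := finite_hsv α n
  have hcard := card_hsv α n
  refine ⟨Wset_vx hconn, ?_, Wset_vy hconn, ?_⟩
  · have hW := ncard_Wset_vx α n
    rw [Lload_pair, Wset_vx hconn, max_eq_right]
    · rw [hW]
      have : ((2 * t : ℕ) : ℝ) = (Fintype.card α + 1 : ℕ) := by rw [ht]
      push_cast at this ⊢
      linarith
    · rw [Set.ncard_compl, hW, hcard]
      -- the complement has `n + 2` elements, and `t ≥ 1` because `2 * t = |U| + 1`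
      exact_mod_cast (by omega)
  · have hP : ({HSV.vs, HSV.vx} : Set (HSV α n)).ncard = 2 := Set.ncard_pair (by simp)
    have hW : (Set.univ \ {HSV.vs, HSV.vx} : Set (HSV α n)).ncard = 2 * (n + t) := by
      rw [← Set.compl_eq_univ_sdiff, Set.ncard_compl, hP, hcard]
      omega
    rw [Lload_pair, Wset_vy hconn, max_eq_right]
    · rw [hW]
      push_cast
      ring
    · rw [hW, ← Set.compl_eq_univ_sdiff, compl_compl, hP]
      exact_mod_cast (by omega)
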